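/- Characterization of the leading-order terms: for D ≥ 2 and any (D+1)-tuple σ of permutations of {1,…,k} whose D-bubble is connected, C_D(σ_D) = 1, the N-exponent attains its maximal value, −(D−1)·k + F(σ) − F_D(σ_D) = 1, if and only if σ has degree zero, i.e. F(σ) = D(D−1)/2 · k + D. -/

import Mathlib

/-- Number of cycles of a permutation counting fixed points: the number of orbits
on `Fin k` of the cyclic group generated by `τ`. -/
noncomputable def cycleCount {k : ℕ} (τ : Equiv.Perm (Fin k)) : ℕ :=
  Nat.card (MulAction.orbitRel.Quotient (Subgroup.zpowers τ) (Fin k))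

/-- Total number of faces of the `(D+1)`-colored graph encoded by `σ`:
`F(σ) = Σ_{c₁ < c₂} c(σ⁽ᶜ¹⁾ ∘ (σ⁽ᶜ²⁾)⁻¹)`. -/
noncomputable def faceCount {k D : ℕ} (σ : Fin (D + 1) → Equiv.Perm (Fin k)) : ℕ :=
  ∑ p ∈ Finset.univ.filter (fun p : Fin (D + 1) × Fin (D + 1) => p.1 < p.2),
    cycleCount (σ p.1 * (σ p.2)⁻¹)

/-- Number of connected components of the `(D+1)`-colored graph encoded by `σ`:
the number of orbits on `Fin k` of the subgroup generated by `(σ⁽⁰⁾)⁻¹ ∘ σ⁽ᶜ⁾`, `1 ≤ c ≤ D`. -/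
noncomputable def compCount {k D : ℕ} (σ : Fin (D + 1) → Equiv.Perm (Fin k)) : ℕ :=
  Nat.card (MulAction.orbitRel.Quotient
    (Subgroup.closure
      {g : Equiv.Perm (Fin k) | ∃ c : Fin (D + 1), c ≠ 0 ∧ g = (σ 0)⁻¹ * σ c}) (Fin k))

/-- Number of faces of the `D`-bubble (colors `1,…,D`) of `σ`:
`F_D(σ_D) = Σ_{1 ≤ c₁ < c₂ ≤ D} c(σ⁽ᶜ¹⁾ ∘ (σ⁽ᶜ²⁾)⁻¹)`. -/
noncomputable def bubbleFaceCount {k D : ℕ} (σ : Fin (D + 1) → Equiv.Perm (Fin k)) : ℕ :=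
  ∑ p ∈ Finset.univ.filter
      (fun p : Fin (D + 1) × Fin (D + 1) => 0 < p.1 ∧ p.1 < p.2),
    cycleCount (σ p.1 * (σ p.2)⁻¹)

/-- Number of connected components of the `D`-bubble of `σ`: the number of orbits
on `Fin k` of the subgroup generated by `(σ⁽¹⁾)⁻¹ ∘ σ⁽ᶜ⁾`, `2 ≤ c ≤ D`. -/
noncomputable def bubbleCompCount {k D : ℕ} (σ : Fin (D + 1) → Equiv.Perm (Fin k)) : ℕ :=
  Nat.card (MulAction.orbitRel.Quotient
    (Subgroup.closure
      {g : Equiv.Perm (Fin k) | ∃ c : Fin (D + 1), 1 < c ∧ g = (σ 1)⁻¹ * σ c}) (Fin k))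

open Module

/-- The difference of the pullbacks of rational functions along two permutations. -/
noncomputable def pullbackSub {k : ℕ} (σ τ : Equiv.Perm (Fin k)) :
    (Fin k → ℚ) →ₗ[ℚ] (Fin k → ℚ) :=
  LinearMap.funLeft ℚ ℚ σ - LinearMap.funLeft ℚ ℚ τ

lemma pullbackSub_apply {k : ℕ} (σ τ : Equiv.Perm (Fin k)) (f : Fin k → ℚ) (x : Fin k) :
    pullbackSub σ τ f x = f (σ x) - f (τ x) := rfl

/-- The Cayley distance of two permutations, as the rank of the difference of their pullbacks. -/
noncomputable def permDist {k : ℕ} (σ τ : Equiv.Perm (Fin k)) : ℕ :=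
  finrank ℚ (LinearMap.range (pullbackSub σ τ))

lemma finrank_invariant_functions {k : ℕ} (τ : Equiv.Perm (Fin k))
    (K : Submodule ℚ (Fin k → ℚ)) (hK : ∀ f, f ∈ K ↔ ∀ x, f (τ x) = f x) :
    finrank ℚ K = cycleCount τ := by
  classical
  let q : Fin k → MulAction.orbitRel.Quotient (Subgroup.zpowers τ) (Fin k) := Quotient.mk _
  have hq : Function.Surjective q := Quotient.mk_surjective
  have hinj : Function.Injective (LinearMap.funLeft ℚ ℚ q) :=
    LinearMap.funLeft_injective_of_surjective ℚ ℚ q hq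
  have hrange : K = LinearMap.range (LinearMap.funLeft ℚ ℚ q) := by
    ext f
    rw [hK, LinearMap.mem_range]
    constructor
    · intro hf
      have hle : Subgroup.zpowers τ ≤
          { carrier := {g : Equiv.Perm (Fin k) | ∀ x, f (g x) = f x}
            mul_mem' := fun {a b} ha hb x => by
              simpa using (ha (b x)).trans (hb x)
            one_mem' := fun x => rfl
            inv_mem' := fun {a} ha x => by
              simpa using (ha (a⁻¹ x)).symm } :=
        (Subgroup.zpowers_le).2 hf
      refine ⟨Quotient.lift f ?_, rfl⟩
      rintro a b ⟨⟨g, hg⟩, rfl⟩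
      exact hle hg b
    · rintro ⟨h, rfl⟩ x
      refine congrArg h (Quotient.sound ?_)
      exact ⟨⟨τ, Subgroup.mem_zpowers τ⟩, rfl⟩
  have : Fintype (MulAction.orbitRel.Quotient (Subgroup.zpowers τ) (Fin k)) :=
    Fintype.ofSurjective q hq
  rw [hrange, LinearMap.finrank_range_of_inj hinj, finrank_fintype_fun_eq_card, cycleCount,
    Nat.card_eq_fintype_card]

lemma permDist_add_cycleCount {k : ℕ} (σ τ : Equiv.Perm (Fin k)) :
    permDist σ τ + cycleCount (σ * τ⁻¹) = k := by
  have h := LinearMap.finrank_range_add_finrank_ker (pullbackSub σ τ)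
  rw [finrank_invariant_functions (σ * τ⁻¹) (LinearMap.ker (pullbackSub σ τ))] at h
  · simpa [permDist] using h
  · intro f
    rw [LinearMap.mem_ker]
    constructor
    · intro hf x
      have := congrFun hf (τ⁻¹ x)
      simpa [pullbackSub_apply, sub_eq_zero] using this
    · intro hf
      ext x
      simpa [pullbackSub_apply, sub_eq_zero] using hf (τ x)

lemma permDist_self {k : ℕ} (σ : Equiv.Perm (Fin k)) : permDist σ σ = 0 := by
  have : pullbackSub σ σ = 0 := sub_self _
  rw [permDist, this, LinearMap.range_zero, finrank_bot]

lemma permDist_comm {k : ℕ} (σ τ : Equiv.Perm (Fin k)) : permDist σ τ = permDist τ σ := by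
  have : pullbackSub σ τ = -pullbackSub τ σ := by simp [pullbackSub]
  rw [permDist, permDist, this, LinearMap.range_neg]

lemma permDist_triangle {k : ℕ} (σ τ ρ : Equiv.Perm (Fin k)) :
    permDist σ ρ ≤ permDist σ τ + permDist τ ρ := by
  have h : pullbackSub σ ρ = pullbackSub σ τ + pullbackSub τ ρ := by simp [pullbackSub]
  rw [permDist, h]
  exact (Submodule.finrank_mono (LinearMap.range_add_le _ _)).trans
    (Submodule.finrank_add_le_finrank_add_finrank _ _)

/-- The colored graph encoded by `τ` is connected: an equivalence relation on the white vertices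
that is compatible with moving along two edges is total. -/
def IsConnectedTuple {k : ℕ} {ι : Type*} (τ : ι → Equiv.Perm (Fin k)) : Prop :=
  ∀ r : Setoid (Fin k), (∀ i j z, r z ((τ i)⁻¹ (τ j z))) → ∀ x y, r x y

lemma IsConnectedTuple.comp {k : ℕ} {ι κ : Type*} {τ : ι → Equiv.Perm (Fin k)}
    (h : IsConnectedTuple τ) (e : κ ≃ ι) : IsConnectedTuple (τ ∘ e) := by
  intro r hr
  refine h r fun i j z => ?_
  simpa using hr (e.symm i) (e.symm j) z

/-- The ranges of the pullback differences of a connected tuple span a space of codimension at most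
one. -/
lemma IsConnectedTuple.le_finrank_add_one {k : ℕ} {ι : Type*} {τ : ι → Equiv.Perm (Fin k)}
    (h : IsConnectedTuple τ) (W : Submodule ℚ (Fin k → ℚ))
    (hW : ∀ i j f, pullbackSub (τ i) (τ j) f ∈ W) : k ≤ finrank ℚ W + 1 := by
  classical
  rcases Nat.eq_zero_or_pos k with rfl | hk
  · simp
  let x₀ : Fin k := ⟨0, hk⟩
  have hmem : ∀ x y : Fin k, (Pi.single x 1 - Pi.single y 1 : Fin k → ℚ) ∈ W := by
    intro x y
    let r : Setoid (Fin k) :=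
      Setoid.ker fun x : Fin k => W.mkQ (Pi.single x (1 : ℚ))
    have hr : r x y := by
      refine h r (fun i j z => ?_) x y
      refine (Submodule.Quotient.eq W).2 ?_
      convert hW j i (Pi.single (τ j z) 1) using 1
      ext w
      have h₁ : w = (τ i)⁻¹ (τ j z) ↔ τ i w = τ j z := Equiv.Perm.eq_inv_iff_eq
      simp only [pullbackSub_apply, Pi.sub_apply, Pi.single_apply, h₁,
        (τ j).injective.eq_iff]
    exact (Submodule.Quotient.eq W).1 hr
  have htop : (⊤ : Submodule ℚ (Fin k → ℚ)) ≤ W ⊔ Submodule.span ℚ {Pi.single x₀ 1} := by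
    rw [← (Pi.basisFun ℚ (Fin k)).span_eq, Submodule.span_le]
    rintro _ ⟨x, rfl⟩
    rw [Pi.basisFun_apply]
    exact Submodule.mem_sup.2 ⟨_, hmem x x₀, _, Submodule.mem_span_singleton_self _, by simp⟩
  have h₁ := Submodule.finrank_mono htop
  have h₂ := Submodule.finrank_add_le_finrank_add_finrank W
    (Submodule.span ℚ {(Pi.single x₀ 1 : Fin k → ℚ)})
  have h₃ : finrank ℚ (Submodule.span ℚ {(Pi.single x₀ 1 : Fin k → ℚ)}) ≤ 1 :=
    (finrank_span_le_card _).trans (by simp)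
  rw [finrank_top, finrank_fintype_fun_eq_card, Fintype.card_fin] at h₁
  exact h₁.trans (h₂.trans (by lia))

/-- Functions whose pullbacks along a connected tuple all agree form a space of dimension at most
one. -/
lemma IsConnectedTuple.finrank_le_one {k : ℕ} {ι : Type*} {τ : ι → Equiv.Perm (Fin k)}
    (h : IsConnectedTuple τ) (i₀ : ι) (K : Submodule ℚ (Fin k → ℚ))
    (hK : ∀ f ∈ K, ∀ i j, pullbackSub (τ i) (τ j) f = 0) : finrank ℚ K ≤ 1 := by
  have hconst : ∀ f ∈ K, ∀ x y, f x = f y := by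
    intro f hf x y
    have hagree : ∀ i j z, f (τ i z) = f (τ j z) := fun i j z =>
      sub_eq_zero.1 (congrFun (hK f hf i j) z)
    have := h (Setoid.ker (f ∘ τ i₀)) (fun i j z => by
      change f (τ i₀ z) = f (τ i₀ ((τ i)⁻¹ (τ j z)))
      rw [hagree i₀ i ((τ i)⁻¹ _), Equiv.Perm.coe_inv, Equiv.apply_symm_apply]
      exact hagree _ _ _) ((τ i₀)⁻¹ x) ((τ i₀)⁻¹ y)
    simpa [Setoid.ker, Function.onFun] using this
  have hle : K ≤ Submodule.span ℚ {(1 : Fin k → ℚ)} := by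
    intro f hf
    rw [Submodule.mem_span_singleton]
    rcases Nat.eq_zero_or_pos k with rfl | hk
    · exact ⟨0, Subsingleton.elim _ _⟩
    · refine ⟨f ⟨0, hk⟩, ?_⟩
      ext x
      simpa using hconst f hf _ _
  exact (Submodule.finrank_mono hle).trans ((finrank_span_le_card _).trans (by simp))

/-- The summation map on a finite product of submodules. -/
noncomputable def sumOfSubmodules {V ι : Type*} [AddCommGroup V] [Module ℚ V] [Fintype ι]
    (R : ι → Submodule ℚ V) : (Π i, R i) →ₗ[ℚ] V :=
  ∑ i, (R i).subtype ∘ₗ LinearMap.proj i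

lemma sumOfSubmodules_apply {V ι : Type*} [AddCommGroup V] [Module ℚ V] [Fintype ι]
    (R : ι → Submodule ℚ V) (v : Π i, R i) : sumOfSubmodules R v = ∑ i, (v i : V) := by
  simp [sumOfSubmodules]

lemma le_range_sumOfSubmodules {V ι : Type*} [AddCommGroup V] [Module ℚ V] [Fintype ι]
    (R : ι → Submodule ℚ V) (i : ι) : R i ≤ LinearMap.range (sumOfSubmodules R) := by
  classical
  intro v hv
  refine ⟨Pi.single i ⟨v, hv⟩, ?_⟩
  rw [sumOfSubmodules_apply, Finset.sum_eq_single i]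
  · simp
  · intro j _ hj
    simp [Pi.single_eq_of_ne hj]
  · simp

lemma IsConnectedTuple.le_sum_permDist {k : ℕ} {ι : Type*} [Fintype ι]
    {τ : ι → Equiv.Perm (Fin k)} (h : IsConnectedTuple τ) (ρ : Equiv.Perm (Fin k)) :
    k ≤ ∑ i, permDist ρ (τ i) + 1 := by
  let R : ι → Submodule ℚ (Fin k → ℚ) := fun i => LinearMap.range (pullbackSub ρ (τ i))
  have h₁ := h.le_finrank_add_one (LinearMap.range (sumOfSubmodules R)) fun i j f => by
    have : pullbackSub (τ i) (τ j) f = pullbackSub ρ (τ j) f - pullbackSub ρ (τ i) f := by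
      simp [pullbackSub]
    rw [this]
    exact Submodule.sub_mem _ (le_range_sumOfSubmodules R j ⟨f, rfl⟩)
      (le_range_sumOfSubmodules R i ⟨f, rfl⟩)
  have h₂ := LinearMap.finrank_range_le (sumOfSubmodules R)
  rw [finrank_pi_fintype] at h₂
  exact h₁.trans (Nat.add_le_add_right h₂ 1)

/-- Nonnegativity of the genus of the ribbon graph attached to a cyclic ordering of the colors. -/
lemma IsConnectedTuple.le_sum_permDist_cyclic {k n : ℕ} {τ : Fin (n + 1) → Equiv.Perm (Fin k)}
    (h : IsConnectedTuple τ) : 2 * k ≤ ∑ i, permDist (τ i) (τ (i + 1)) + 2 := by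
  let R : Fin (n + 1) → Submodule ℚ (Fin k → ℚ) := fun i =>
    LinearMap.range (pullbackSub (τ i) (τ (i + 1)))
  let δ := sumOfSubmodules R
  let β : (Fin k → ℚ) →ₗ[ℚ] (Π i, R i) :=
    LinearMap.pi fun i => (pullbackSub (τ i) (τ (i + 1))).rangeRestrict
  have hβ : ∀ f i, (β f i : Fin k → ℚ) = pullbackSub (τ i) (τ (i + 1)) f := fun f i => rfl
  have hchain : ∀ (W : Submodule ℚ (Fin k → ℚ)) (f : Fin k → ℚ),
      (∀ i, pullbackSub (τ i) (τ (i + 1)) f ∈ W) → ∀ i j, pullbackSub (τ i) (τ j) f ∈ W := by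
    intro W f hf
    have hzero : ∀ i, pullbackSub (τ 0) (τ i) f ∈ W := by
      intro i
      induction i using Fin.induction with
      | zero => simp [pullbackSub]
      | succ i ih =>
        have := W.add_mem ih (hf i.castSucc)
        rw [Fin.coeSucc_eq_succ] at this
        simpa [pullbackSub] using this
    intro i j
    have := W.sub_mem (hzero j) (hzero i)
    simpa [pullbackSub] using this
  have hδβ : LinearMap.range β ≤ LinearMap.ker δ := by
    rintro _ ⟨f, rfl⟩
    rw [LinearMap.mem_ker, sumOfSubmodules_apply]
    simp only [hβ, pullbackSub, LinearMap.sub_apply, Finset.sum_sub_distrib]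
    rw [sub_eq_zero]
    exact (Equiv.sum_comp (Equiv.addRight (1 : Fin (n + 1)))
      fun i => LinearMap.funLeft ℚ ℚ (τ i) f).symm
  have h₁ : k ≤ finrank ℚ (LinearMap.range δ) + 1 :=
    h.le_finrank_add_one _ fun i j f =>
      hchain _ f (fun i => le_range_sumOfSubmodules R i ⟨f, rfl⟩) i j
  have h₂ : finrank ℚ (LinearMap.ker β) ≤ 1 :=
    h.finrank_le_one 0 _ fun f hf i j => by
      have := hchain ⊥ f (fun i => by
        rw [Submodule.mem_bot, ← hβ, LinearMap.mem_ker.1 hf]; rfl) i j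
      simpa using this
  have h₃ := Submodule.finrank_mono hδβ
  have h₄ := LinearMap.finrank_range_add_finrank_ker β
  have h₅ := LinearMap.finrank_range_add_finrank_ker δ
  rw [finrank_fintype_fun_eq_card, Fintype.card_fin] at h₄
  have h₆ : finrank ℚ (Π i, R i) = ∑ i, permDist (τ i) (τ (i + 1)) := by
    rw [finrank_pi_fintype]; rfl
  lia

lemma sum_perm_apply_pair_eq {α : Type*} [Fintype α] [DecidableEq α] (f : α → α → ℕ)
    {i j i' j' : α} (h : i ≠ j) (h' : i' ≠ j') :
    ∑ p : Equiv.Perm α, f (p i) (p j) = ∑ p : Equiv.Perm α, f (p i') (p j') := by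
  obtain ⟨e, hi, hj⟩ : ∃ e : Equiv.Perm α, e i' = i ∧ e j' = j := by
    refine ⟨Equiv.swap (Equiv.swap i' i j') j * Equiv.swap i' i, ?_, ?_⟩
    · rw [Equiv.Perm.mul_apply, Equiv.swap_apply_left, Equiv.swap_apply_of_ne_of_ne _ h]
      intro hc
      apply h'
      apply (Equiv.swap i' i).injective
      rw [← hc, Equiv.swap_apply_left]
    · simp
  rw [← Equiv.sum_comp (Equiv.mulRight e) fun p : Equiv.Perm α => f (p i') (p j')]
  simp [hi, hj]

/-- If every cyclic ordering of `n + 1 ≥ 2` points has `f`-length at least `m`, then averaging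
bounds the sum of `f` over all ordered pairs. -/
lemma mul_le_sum_of_le_cyclic_sum {n m : ℕ} (hn : 1 ≤ n) (f : Fin (n + 1) → Fin (n + 1) → ℕ)
    (hdiag : ∀ i, f i i = 0)
    (hf : ∀ p : Equiv.Perm (Fin (n + 1)), m ≤ ∑ i, f (p i) (p (i + 1))) :
    n * m ≤ ∑ i, ∑ j, f i j := by
  obtain ⟨n, rfl⟩ := Nat.exists_eq_add_of_le' hn
  set N := Fintype.card (Equiv.Perm (Fin (n + 1 + 1))) with hN
  set S := ∑ p : Equiv.Perm (Fin (n + 1 + 1)), f (p 0) (p 1)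
  have hpair : ∀ i j : Fin (n + 1 + 1), i ≠ j →
      ∑ p : Equiv.Perm (Fin (n + 1 + 1)), f (p i) (p j) = S := fun i j hij =>
    sum_perm_apply_pair_eq f hij (by simp)
  have h₁ : N * m ≤ (n + 1 + 1) * S := by
    calc N * m = ∑ _p : Equiv.Perm (Fin (n + 1 + 1)), m := by simp [hN]
      _ ≤ ∑ p : Equiv.Perm (Fin (n + 1 + 1)), ∑ i, f (p i) (p (i + 1)) :=
        Finset.sum_le_sum fun p _ => hf p
      _ = ∑ i, ∑ p : Equiv.Perm (Fin (n + 1 + 1)), f (p i) (p (i + 1)) := Finset.sum_comm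
      _ = ∑ _i : Fin (n + 1 + 1), S := Finset.sum_congr rfl fun i _ => hpair _ _ (by simp)
      _ = _ := by simp
  have h₂ : N * ∑ i, ∑ j, f i j = (n + 1 + 1) * ((n + 1) * S) := by
    calc N * ∑ i, ∑ j, f i j
        = ∑ _p : Equiv.Perm (Fin (n + 1 + 1)), ∑ i, ∑ j, f i j := by simp [hN]
      _ = ∑ p : Equiv.Perm (Fin (n + 1 + 1)), ∑ i, ∑ j, f (p i) (p j) := by
        refine Finset.sum_congr rfl fun p _ => ?_
        rw [← Equiv.sum_comp p]
        exact Finset.sum_congr rfl fun i _ => (Equiv.sum_comp p _).symm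
      _ = ∑ i, ∑ j, ∑ p : Equiv.Perm (Fin (n + 1 + 1)), f (p i) (p j) := by
        rw [Finset.sum_comm]
        exact Finset.sum_congr rfl fun i _ => Finset.sum_comm
      _ = ∑ _i : Fin (n + 1 + 1), (n + 1) * S := by
        refine Finset.sum_congr rfl fun i _ => ?_
        rw [← Finset.add_sum_erase _ _ (Finset.mem_univ i),
          Finset.sum_congr rfl fun j hj => hpair i j (Finset.ne_of_mem_erase hj).symm]
        simp [hdiag]
      _ = _ := by simp
  have hNpos : 0 < N := Fintype.card_pos
  refine Nat.le_of_mul_le_mul_left ?_ hNpos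
  rw [h₂]
  calc N * ((n + 1) * m) = (n + 1) * (N * m) := by ring
    _ ≤ (n + 1) * ((n + 1 + 1) * S) := Nat.mul_le_mul_left _ h₁
    _ = _ := by ring

lemma isConnectedTuple_of_bubbleCompCount_eq_one {k n : ℕ}
    {σ : Fin (n + 1 + 1) → Equiv.Perm (Fin k)} (h : bubbleCompCount σ = 1) :
    IsConnectedTuple fun i : Fin (n + 1) => σ i.succ := by
  intro r hr x y
  have hsub := (Nat.card_eq_one_iff_unique.1 h).1
  obtain ⟨⟨g, hg⟩, rfl⟩ :=
    Quotient.exact (@Subsingleton.elim _ hsub (Quotient.mk _ x) (Quotient.mk _ y))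
  change r (g y) y
  have hle : Subgroup.closure
      {g : Equiv.Perm (Fin k) | ∃ c : Fin (n + 1 + 1), 1 < c ∧ g = (σ 1)⁻¹ * σ c} ≤
      { carrier := {g : Equiv.Perm (Fin k) | ∀ x, r (g x) x}
        mul_mem' := fun {a b} ha hb x => r.trans (ha (b x)) (hb x)
        one_mem' := fun x => r.refl x
        inv_mem' := fun {a} ha x => by
          simpa using r.symm (ha (a⁻¹ x)) } := by
    rw [Subgroup.closure_le]
    rintro _ ⟨c, hc, rfl⟩ z
    obtain ⟨c, rfl⟩ := Fin.exists_succ_eq.2 (Fin.ne_zero_of_lt hc)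
    exact r.symm (hr 0 c z)
  exact hle hg y

lemma faceCount_eq_bubbleFaceCount_add {k D : ℕ} (σ : Fin (D + 1) → Equiv.Perm (Fin k)) :
    faceCount σ = bubbleFaceCount σ + ∑ i : Fin D, cycleCount (σ 0 * (σ i.succ)⁻¹) := by
  simp [faceCount, bubbleFaceCount, Finset.sum_filter, Fintype.sum_prod_type, Fin.sum_univ_succ,
    add_comm]

lemma two_mul_bubbleFaceCount_add {k D : ℕ} (σ : Fin (D + 1) → Equiv.Perm (Fin k)) :
    2 * bubbleFaceCount σ + D * k + ∑ i : Fin D, ∑ j : Fin D, permDist (σ i.succ) (σ j.succ) =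
      D * (D * k) := by
  have hcomm : ∀ a b : Equiv.Perm (Fin k), cycleCount (a * b⁻¹) = cycleCount (b * a⁻¹) := by
    intro a b
    have h₁ := permDist_add_cycleCount a b
    have h₂ := permDist_add_cycleCount b a
    rw [permDist_comm] at h₁
    lia
  have hself : ∀ a : Equiv.Perm (Fin k), cycleCount (a * a⁻¹) = k := by
    intro a
    have h₁ := permDist_add_cycleCount a a
    rw [permDist_self] at h₁
    lia
  set F : Fin D → Fin D → ℕ := fun i j => cycleCount (σ i.succ * (σ j.succ)⁻¹) with hF
  have hB : bubbleFaceCount σ = ∑ i : Fin D, ∑ j : Fin D, if i < j then F i j else 0 := by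
    simp [bubbleFaceCount, Finset.sum_filter, Fintype.sum_prod_type, Fin.sum_univ_succ, hF]
  have hB' : bubbleFaceCount σ = ∑ i : Fin D, ∑ j : Fin D, if j < i then F i j else 0 := by
    rw [hB, Finset.sum_comm]
    refine Finset.sum_congr rfl fun i _ => Finset.sum_congr rfl fun j _ => ?_
    simp only [hF]
    rw [hcomm]
  have hdiag : D * k = ∑ i : Fin D, ∑ j : Fin D, if i = j then F i j else 0 := by
    simp only [hF, Finset.sum_ite_eq, Finset.mem_univ, if_true, hself]
    simp
  have hsplit : ∑ i, ∑ j, F i j = 2 * bubbleFaceCount σ + D * k := by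
    rw [two_mul]
    nth_rewrite 1 [hB]
    rw [hB', hdiag]
    simp only [← Finset.sum_add_distrib]
    refine Finset.sum_congr rfl fun i _ => Finset.sum_congr rfl fun j _ => ?_
    rcases lt_trichotomy i j with h | h | h
    · simp [h, h.ne, h.not_gt]
    · simp [h]
    · simp [h, h.ne', h.not_gt]
  rw [← hsplit]
  simp only [← Finset.sum_add_distrib]
  calc _ = ∑ _i : Fin D, ∑ _j : Fin D, k :=
        Finset.sum_congr rfl fun i _ => Finset.sum_congr rfl fun j _ => by
          rw [add_comm]; exact permDist_add_cycleCount _ _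
    _ = _ := by simp

lemma sum_permDist_add_le {k D : ℕ} (ρ : Equiv.Perm (Fin k)) (τ : Fin D → Equiv.Perm (Fin k)) :
    ∑ i, ∑ j, permDist (τ i) (τ j) + 2 * ∑ i, permDist ρ (τ i) ≤
      2 * (D * ∑ i, permDist ρ (τ i)) := by
  have h : ∑ i, ∑ j, (permDist (τ i) (τ j) + if i = j then 2 * permDist ρ (τ i) else 0) ≤
      ∑ i, ∑ j, (permDist ρ (τ i) + permDist ρ (τ j)) := by
    refine Finset.sum_le_sum fun i _ => Finset.sum_le_sum fun j _ => ?_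
    split_ifs with hij
    · subst hij
      rw [permDist_self]
      lia
    · rw [permDist_comm ρ (τ i)]
      exact permDist_triangle _ _ _
  simp only [Finset.sum_add_distrib, Finset.sum_ite_eq, Finset.mem_univ, if_true,
    Finset.sum_const, Finset.card_univ, Fintype.card_fin, smul_eq_mul, ← Finset.mul_sum] at h
  lia

/-- Characterization of the leading-order terms: if the `D`-bubble of `σ` is connected,
the `N`-exponent attains its maximal value `1` if and only if `σ` has degree zero,
i.e. `F(σ) = D(D−1)/2·k + D`. -/
theorem leading_order_iff_degree_zero (k D : ℕ) (hk : 1 ≤ k) (hD : 2 ≤ D)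
    (σ : Fin (D + 1) → Equiv.Perm (Fin k)) (hbub : bubbleCompCount σ = 1) :
    -(D - 1 : ℤ) * k + (faceCount σ : ℤ) - (bubbleFaceCount σ : ℤ) = 1 ↔
      faceCount σ = D * (D - 1) / 2 * k + D := by
  obtain ⟨n, rfl⟩ : ∃ n, D = n + 1 := ⟨D - 1, by lia⟩
  obtain ⟨m, rfl⟩ : ∃ m, k = m + 1 := ⟨k - 1, by lia⟩
  have hconn := isConnectedTuple_of_bubbleCompCount_eq_one hbub
  have hstar := hconn.le_sum_permDist (σ 0)
  have hpairs : n * (2 * m) ≤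
      ∑ i : Fin (n + 1), ∑ j : Fin (n + 1), permDist (σ i.succ) (σ j.succ) :=
    mul_le_sum_of_le_cyclic_sum (by lia) _ (fun i => permDist_self _) fun p => by
      have := (hconn.comp p).le_sum_permDist_cyclic
      simp only [Function.comp_apply] at this
      lia
  have htri := sum_permDist_add_le (σ 0) fun i : Fin (n + 1) => σ i.succ
  have hface := faceCount_eq_bubbleFaceCount_add σ
  have hbubble := two_mul_bubbleFaceCount_add σ
  have hcycles : ∑ i : Fin (n + 1), permDist (σ 0) (σ i.succ) +
      ∑ i : Fin (n + 1), cycleCount (σ 0 * (σ i.succ)⁻¹) = (n + 1) * (m + 1) := by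
    rw [← Finset.sum_add_distrib, Finset.sum_congr rfl fun i _ => permDist_add_cycleCount _ _]
    simp
  obtain ⟨t, ht⟩ : ∃ t, (n + 1) * n = 2 * t := by
    obtain ⟨t, ht⟩ := (Nat.even_mul_succ_self n).two_dvd
    exact ⟨t, by rw [← ht, mul_comm]⟩
  have hhalf : (n + 1) * (n + 1 - 1) / 2 = t := by
    rw [Nat.add_sub_cancel, ht]; lia
  rw [hhalf]
  generalize ∑ i : Fin (n + 1), permDist (σ 0) (σ i.succ) = G at *
  generalize ∑ i : Fin (n + 1), ∑ j : Fin (n + 1), permDist (σ i.succ) (σ j.succ) = Φ at *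
  generalize ∑ i : Fin (n + 1), cycleCount (σ 0 * (σ i.succ)⁻¹) = C at *
  generalize faceCount σ = F at *
  generalize bubbleFaceCount σ = B at *
  zify at *
  have hleft : -((n + 1 : ℤ) - 1) * (m + 1) + F - B = 1 ↔ (G : ℤ) = m := by
    constructor <;> intro h <;> linear_combination (-1) * h + hface + hcycles
  have hright : (F : ℤ) = t * (m + 1) + (n + 1) ↔ (2 * G + Φ : ℤ) = 2 * (n + 1) * m := by
    constructor <;> intro h
    · linear_combination (-2) * h + 2 * hface + 2 * hcycles + hbubble + (m + 1) * ht
    · have h₂ : (2 * F : ℤ) = 2 * (t * (m + 1) + (n + 1)) := by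
        linear_combination -h + 2 * hface + 2 * hcycles + hbubble + (m + 1) * ht
      lia
  rw [hleft, hright]
  constructor
  · rintro h
    rw [h] at htri ⊢
    linarith
  · intro h
    linarith
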